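/- Let I ⊆ ℝ be an interval and let γ : I → ℂ be a continuous and locally injective curve which is analytic at a point t0 ∈ I. Then a function f : γ(I) → ℂ is real analytic at (t0, γ(t0)) if and only if f is holomorphically extendable at (t0, γ(t0)). -/

import Mathlib

open Set Metric Filter

/-- `γ` is locally injective on `I`: every point of `I` has a relative neighborhood
in `I` on which `γ` is injective. -/
def LocallyInjOn (γ : ℝ → ℂ) (I : Set ℝ) : Prop :=
  ∀ t ∈ I, ∃ ε > 0, Set.InjOn γ (I ∩ Ioo (t - ε) (t + ε))

/-- The curve `γ : I → ℂ` is analytic at `t0 ∈ I`: there exist an open set `V ⊆ ℂ`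
containing `t0`, a `δ > 0` with `(t0−δ, t0+δ) ∩ I ⊆ V`, and an injective holomorphic
function `F : V → ℂ` agreeing with `γ` on `(t0−δ, t0+δ) ∩ I`. -/
def AnalyticCurveAt (γ : ℝ → ℂ) (I : Set ℝ) (t0 : ℝ) : Prop :=
  ∃ (V : Set ℂ) (δ : ℝ) (F : ℂ → ℂ), IsOpen V ∧ (t0 : ℂ) ∈ V ∧ 0 < δ ∧
    (∀ t ∈ Ioo (t0 - δ) (t0 + δ) ∩ I, (t : ℂ) ∈ V) ∧
    DifferentiableOn ℂ F V ∧ Set.InjOn F V ∧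
    ∀ t ∈ Ioo (t0 - δ) (t0 + δ) ∩ I, F (t : ℂ) = γ t

/-- `f : γ(I) → ℂ` is real analytic at `(t0, γ(t0))`: there are `δ > 0` and a power
series `Σ aₙ (t − t0)ⁿ` with radius of convergence `> δ` (witnessed by `ρ > δ` with
`Σ ‖aₙ‖ ρⁿ < ∞`) representing `f ∘ γ` on `(t0−δ, t0+δ) ∩ I`. -/
def RealAnalyticAtCurve (γ : ℝ → ℂ) (I : Set ℝ) (f : ℂ → ℂ) (t0 : ℝ) : Prop :=
  ∃ (a : ℕ → ℂ) (δ ρ : ℝ), 0 < δ ∧ δ < ρ ∧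
    Summable (fun n => ‖a n‖ * ρ ^ n) ∧
    ∀ t ∈ Ioo (t0 - δ) (t0 + δ) ∩ I,
      HasSum (fun n => a n * ((t : ℂ) - (t0 : ℂ)) ^ n) (f (γ t))

/-- `f : γ(I) → ℂ` is holomorphically extendable at `(t0, γ(t0))`: there exist `r > 0`,
`η > 0` and a holomorphic `F` on `D(γ(t0), r)` with `γ((t0−η, t0+η) ∩ I) ⊆ D(γ(t0), r)`
and `F(γ(t)) = f(γ(t))` for `t ∈ (t0−η, t0+η) ∩ I`. -/
def HolExtAtCurve (γ : ℝ → ℂ) (I : Set ℝ) (f : ℂ → ℂ) (t0 : ℝ) : Prop :=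
  ∃ (r η : ℝ) (F : ℂ → ℂ), 0 < r ∧ 0 < η ∧
    DifferentiableOn ℂ F (ball (γ t0) r) ∧
    γ '' (Ioo (t0 - η) (t0 + η) ∩ I) ⊆ ball (γ t0) r ∧
    ∀ t ∈ Ioo (t0 - η) (t0 + η) ∩ I, F (γ t) = f (γ t)

/-!
An injective holomorphic `F` with `F(t) = γ(t)` has a holomorphic left inverse `G` near `γ(t₀)`.
Real analyticity of `f` means that `f(γ(t)) = g(t)` near `t₀` for a holomorphic germ `g` at `t₀`,
and holomorphic extendability that `f(γ(t)) = Φ(γ(t))` near `t₀` for a holomorphic germ `Φ` at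
`γ(t₀)`. One passes from one germ to the other by `g = Φ ∘ F` and `Φ = g ∘ G`.
-/

open scoped Topology

section LeftInverse

lemma not_eventually_eq_of_eventually_leftInverse {X Y : Type*} [TopologicalSpace X] {f : X → Y}
    {g : Y → X} {x : X} [(𝓝[≠] x).NeBot] (hgf : ∀ᶠ y in 𝓝 x, g (f y) = y) :
    ¬ ∀ᶠ y in 𝓝 x, f y = f x := by
  intro hconst
  have heq : ∀ᶠ y in 𝓝[≠] x, y = x := by
    filter_upwards [nhdsWithin_le_nhds hgf, nhdsWithin_le_nhds hconst] with y hy hyx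
    rw [← hy, hyx, hgf.self_of_nhds]
  obtain ⟨y, hyx, hne⟩ := (heq.and self_mem_nhdsWithin).exists
  exact hne hyx

lemma continuousAt_of_eventually_leftInverse {X Y : Type*} [TopologicalSpace X]
    [TopologicalSpace Y] {f : X → Y} {g : Y → X} {x : X} (hf : 𝓝 (f x) ≤ map f (𝓝 x))
    (hgf : ∀ᶠ y in 𝓝 x, g (f y) = y) : ContinuousAt g (f x) := by
  have hcomp : Tendsto (g ∘ f) (𝓝 x) (𝓝 x) :=
    tendsto_id.congr' (hgf.mono fun _ hy => hy.symm)
  rw [ContinuousAt, hgf.self_of_nhds]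
  exact (tendsto_map'_iff.2 hcomp).mono_left hf

lemma eventually_deriv_ne_zero_of_not_eventually_eq {𝕜 E : Type*} [NontriviallyNormedField 𝕜]
    [CompleteSpace 𝕜] [CharZero 𝕜] [NormedAddCommGroup E] [NormedSpace 𝕜 E] [CompleteSpace E]
    {f : 𝕜 → E} {z : 𝕜} (hf : AnalyticAt 𝕜 f z) (hconst : ¬ ∀ᶠ w in 𝓝 z, f w = f z) :
    ∀ᶠ w in 𝓝[≠] z, deriv f w ≠ 0 := by
  refine hf.deriv.eventually_eq_zero_or_eventually_ne_zero.resolve_left fun hderiv => hconst ?_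
  have horder : analyticOrderAt (f · - f z) z = ⊤ := by
    rw [← hf.analyticOrderAt_deriv_add_one, analyticOrderAt_eq_top.2 hderiv, top_add]
  simpa only [analyticOrderAt_eq_top, sub_eq_zero] using horder

/-- The inverse function theorem applies only at the points `w ≠ z` near `z`, where `deriv f w ≠ 0`
is known; the singularity of `g` at `f z` is then removable because `g` is continuous there. -/
theorem analyticAt_of_eventually_leftInverse {f g : ℂ → ℂ} {z : ℂ} (hf : AnalyticAt ℂ f z)
    (hgf : ∀ᶠ w in 𝓝 z, g (f w) = w) : AnalyticAt ℂ g (f z) := by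
  have hconst : ¬ ∀ᶠ w in 𝓝 z, f w = f z :=
    not_eventually_eq_of_eventually_leftInverse hgf
  have hopen : 𝓝 (f z) ≤ map f (𝓝 z) :=
    hf.eventually_constant_or_nhds_le_map_nhds.resolve_left hconst
  have hdiff : ∀ᶠ w in 𝓝 z, f w ≠ f z → DifferentiableAt ℂ g (f w) := by
    have hderiv_ne := eventually_deriv_ne_zero_of_not_eventually_eq hf hconst
    filter_upwards [eventually_nhdsWithin_iff.1 hderiv_ne, hf.eventually_analyticAt,
      hgf.eventually_nhds] with w hderiv hfw hgfw hne
    exact (hfw.hasStrictDerivAt.to_local_left_inverse (hderiv (ne_of_apply_ne f hne))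
      hgfw).hasDerivAt.differentiableAt
  exact Complex.analyticAt_of_differentiable_on_punctured_nhds_of_continuousAt
    (eventually_nhdsWithin_iff.2 (hopen hdiff)) (continuousAt_of_eventually_leftInverse hopen hgf)

end LeftInverse

section PowerSeries

variable {𝕜 E : Type*} [NontriviallyNormedField 𝕜] [NormedAddCommGroup E] [NormedSpace 𝕜 E]

lemma analyticAt_tsum_pow_smul [CompleteSpace E] {a : ℕ → E} {ρ : ℝ} (hρ : 0 < ρ)
    (ha : Summable fun n => ‖a n‖ * ρ ^ n) (z₀ : 𝕜) :
    AnalyticAt 𝕜 (fun z => ∑' n, (z - z₀) ^ n • a n) z₀ := by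
  refine ⟨fun n => ContinuousMultilinearMap.mkPiRing 𝕜 (Fin n) (a n),
    hasFPowerSeriesAt_iff'.2 ?_⟩
  filter_upwards [ball_mem_nhds z₀ hρ] with z hz
  have hsum : Summable fun n => (z - z₀) ^ n • a n := by
    refine Summable.of_norm_bounded ha fun n => ?_
    rw [norm_smul, norm_pow, mul_comm]
    gcongr
    exact (mem_ball_iff_norm.1 hz).le
  simpa [FormalMultilinearSeries.coeff] using hsum.hasSum

lemma exists_summable_hasSum_pow_smul_of_analyticAt {g : 𝕜 → E} {z₀ : 𝕜}
    (hg : AnalyticAt 𝕜 g z₀) :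
    ∃ (a : ℕ → E) (ρ : ℝ), 0 < ρ ∧ (Summable fun n => ‖a n‖ * ρ ^ n) ∧
      ∀ᶠ z in 𝓝 z₀, HasSum (fun n => (z - z₀) ^ n • a n) (g z) := by
  obtain ⟨p, hp⟩ := hg
  obtain ⟨ρ, hρ, hρp⟩ := ENNReal.lt_iff_exists_nnreal_btwn.1 hp.radius_pos
  refine ⟨p.coeff, ρ, by exact_mod_cast hρ, ?_, hasFPowerSeriesAt_iff'.1 hp⟩
  simpa only [FormalMultilinearSeries.norm_apply_eq_norm_coef] using p.summable_norm_mul_pow hρp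

end PowerSeries

lemma eventually_nhdsWithin_iff_exists_Ioo {α : Type*} [AddCommGroup α] [LinearOrder α]
    [IsOrderedAddMonoid α] [TopologicalSpace α] [OrderTopology α] [NoMinOrder α] [NoMaxOrder α]
    {s : Set α} {a : α} {P : α → Prop} :
    (∀ᶠ t in 𝓝[s] a, P t) ↔ ∃ ε > 0, ∀ t ∈ Ioo (a - ε) (a + ε) ∩ s, P t :=
  (nhdsWithin_hasBasis (nhds_basis_Ioo_pos a) s).eventually_iff

section Germs

variable {γ : ℝ → ℂ} {I : Set ℝ} {f : ℂ → ℂ} {t0 : ℝ}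

lemma AnalyticCurveAt.exists_analyticAt_leftInverse (hγ : AnalyticCurveAt γ I t0) :
    ∃ F G : ℂ → ℂ, AnalyticAt ℂ F t0 ∧ (∀ᶠ z in 𝓝 (t0 : ℂ), G (F z) = z) ∧
      ∀ᶠ t : ℝ in 𝓝[I] t0, F t = γ t := by
  obtain ⟨V, δ, F, hV, ht0V, hδ, -, hF, hFinj, hFγ⟩ := hγ
  refine ⟨F, Function.invFunOn F V, hF.analyticAt (hV.mem_nhds ht0V), ?_,
    eventually_nhdsWithin_iff_exists_Ioo.2 ⟨δ, hδ, hFγ⟩⟩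
  filter_upwards [hV.mem_nhds ht0V] with z hz using hFinj.leftInvOn_invFunOn hz

lemma AnalyticCurveAt.continuousWithinAt (hγ : AnalyticCurveAt γ I t0) (ht0 : t0 ∈ I) :
    ContinuousWithinAt γ I t0 := by
  obtain ⟨F, -, hF, -, hFγ⟩ := hγ.exists_analyticAt_leftInverse
  exact (hF.continuousAt.comp_continuousWithinAt
    Complex.continuous_ofReal.continuousWithinAt).congr_of_eventuallyEq_of_mem
    (hFγ.mono fun _ ht => ht.symm) ht0

lemma realAnalyticAtCurve_iff_exists_analyticAt :
    RealAnalyticAtCurve γ I f t0 ↔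
      ∃ g : ℂ → ℂ, AnalyticAt ℂ g t0 ∧ ∀ᶠ t : ℝ in 𝓝[I] t0, g t = f (γ t) := by
  constructor
  · rintro ⟨a, δ, ρ, hδ, hδρ, ha, hf⟩
    refine ⟨_, analyticAt_tsum_pow_smul (hδ.trans hδρ) ha _,
      eventually_nhdsWithin_iff_exists_Ioo.2 ⟨δ, hδ, fun t ht => ?_⟩⟩
    simpa only [smul_eq_mul, mul_comm] using (hf t ht).tsum_eq
  · rintro ⟨g, hg, hgf⟩
    obtain ⟨a, ρ, hρ, ha, hsum⟩ := exists_summable_hasSum_pow_smul_of_analyticAt hg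
    have hsum_f : ∀ᶠ t : ℝ in 𝓝[I] t0,
        HasSum (fun n => a n * ((t : ℂ) - (t0 : ℂ)) ^ n) (f (γ t)) := by
      filter_upwards [Complex.continuous_ofReal.continuousWithinAt.eventually hsum, hgf]
        with t ht hgt
      simpa only [smul_eq_mul, mul_comm, hgt] using ht
    obtain ⟨η, hη, hη_sum⟩ := eventually_nhdsWithin_iff_exists_Ioo.1 hsum_f
    refine ⟨a, min η (ρ / 2), ρ, lt_min hη (half_pos hρ),
      (min_le_right _ _).trans_lt (half_lt_self hρ), ha, fun t ht => hη_sum t ?_⟩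
    have hle : min η (ρ / 2) ≤ η := min_le_left _ _
    exact ⟨Ioo_subset_Ioo (by gcongr) (by gcongr) ht.1, ht.2⟩

lemma holExtAtCurve_iff_exists_analyticAt (hγ : ContinuousWithinAt γ I t0) :
    HolExtAtCurve γ I f t0 ↔
      ∃ Φ : ℂ → ℂ, AnalyticAt ℂ Φ (γ t0) ∧ ∀ᶠ t in 𝓝[I] t0, Φ (γ t) = f (γ t) := by
  constructor
  · rintro ⟨r, η, Φ, hr, hη, hΦ, -, hΦf⟩
    exact ⟨Φ, hΦ.analyticAt (ball_mem_nhds _ hr),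
      eventually_nhdsWithin_iff_exists_Ioo.2 ⟨η, hη, hΦf⟩⟩
  · rintro ⟨Φ, hΦ, hΦf⟩
    obtain ⟨r, hr, hball⟩ := Metric.eventually_nhds_iff_ball.1 hΦ.eventually_analyticAt
    obtain ⟨η, hη, hη_curve⟩ := eventually_nhdsWithin_iff_exists_Ioo.1
      ((hγ.eventually (ball_mem_nhds _ hr)).and hΦf)
    exact ⟨r, η, Φ, hr, hη, fun z hz => (hball z hz).differentiableAt.differentiableWithinAt,
      image_subset_iff.2 fun t ht => (hη_curve t ht).1, fun t ht => (hη_curve t ht).2⟩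

theorem realAnalyticAt_iff_holExtAt_general (ht0 : t0 ∈ I) (hγ : AnalyticCurveAt γ I t0) :
    RealAnalyticAtCurve γ I f t0 ↔ HolExtAtCurve γ I f t0 := by
  obtain ⟨F, G, hF, hGF, hFγ⟩ := hγ.exists_analyticAt_leftInverse
  have hFt0 : F t0 = γ t0 := hFγ.self_of_nhdsWithin ht0
  rw [realAnalyticAtCurve_iff_exists_analyticAt,
    holExtAtCurve_iff_exists_analyticAt (hγ.continuousWithinAt ht0), ← hFt0]
  constructor
  · rintro ⟨g, hg, hgf⟩
    refine ⟨g ∘ G, hg.comp_of_eq (analyticAt_of_eventually_leftInverse hF hGF)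
      hGF.self_of_nhds, ?_⟩
    filter_upwards [hgf, hFγ, Complex.continuous_ofReal.continuousWithinAt.eventually hGF]
      with t hgt hFt hGt
    rw [Function.comp_apply, ← hFt, hGt, hgt, hFt]
  · rintro ⟨Φ, hΦ, hΦf⟩
    refine ⟨Φ ∘ F, hΦ.comp hF, ?_⟩
    filter_upwards [hΦf, hFγ] with t hΦt hFt
    rw [Function.comp_apply, hFt, hΦt]

end Germs

/-- If `γ : I → ℂ` is a continuous, locally injective curve on an interval `I ⊆ ℝ`
which is analytic at `t0 ∈ I`, then `f : γ(I) → ℂ` is real analytic at `(t0, γ(t0))`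
iff it is holomorphically extendable at `(t0, γ(t0))`. -/
theorem realAnalyticAt_iff_holExtAt
    (I : Set ℝ) (hI : I.OrdConnected) (γ : ℝ → ℂ)
    (hcont : ContinuousOn γ I) (hinj : LocallyInjOn γ I)
    (t0 : ℝ) (ht0 : t0 ∈ I) (han : AnalyticCurveAt γ I t0)
    (f : ℂ → ℂ) :
    RealAnalyticAtCurve γ I f t0 ↔ HolExtAtCurve γ I f t0 :=
  realAnalyticAt_iff_holExtAt_general ht0 han
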